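/- arXiv:1702.06240 — 4 statements merged into one kernel-verified Lean document; each statement's English description precedes it below -/
import Mathlib

section
/- For every 𝒵-measurable integrable real random variable M such that M + (D/S)·(Y* − M) is integrable, E[M + (D/S)·(Y* − M) | 𝒵] = E[Y* | 𝒵] a.s.; that is, the Robins–Rotnitzky-type doubly robust signal is an unbiased signal for the regression function with partially missing outcome, for any 𝒵-measurable regression-function plug-in M. -/
open MeasureTheory Filter
open scoped ENNReal

/-!
Multiplying the signal `M + D/S · (Y − M)` by `S` turns it into `D Y + M (S − D)`. The residual
`S − D` has conditional mean zero, hence so has `M (S − D)`, and missingness at random gives `D Y`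
the conditional mean `S · E[Y | 𝒵]`; dividing by `S` yields the claim. Since `M (S − D)` need not be
integrable, the actual multiplier is `(1 + |M|)⁻¹ S`: it makes every term integrable and is still
nonzero and `𝒵`-measurable, so that it can be pulled out of the conditional expectation and
cancelled.
-/

section

variable {Ω : Type*} {m m0 : MeasurableSpace Ω} {μ : Measure Ω} {f g v w : Ω → ℝ}

lemma integrable_of_ae_eq_condExp_of_ae_ne_zero (hg : g =ᵐ[μ] μ[f | m])
    (hg0 : ∀ᵐ ω ∂μ, g ω ≠ 0) : Integrable f μ := by
  by_contra hf
  rw [condExp_of_not_integrable hf] at hg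
  have hfalse : ∀ᵐ _ ∂μ, False := by
    filter_upwards [hg, hg0] with ω hω hne using hne hω
  have hμ : μ = 0 := by simpa using hfalse
  exact hf (hμ ▸ integrable_zero_measure)

lemma integrable_mul_of_forall_eq_zero_or_eq_one (hf : AEStronglyMeasurable f μ)
    (hf01 : ∀ ω, f ω = 0 ∨ f ω = 1) (hg : Integrable g μ) :
    Integrable (fun ω => f ω * g ω) μ := by
  refine hg.bdd_mul (c := 1) hf (ae_of_all μ fun ω => ?_)
  rcases hf01 ω with h | h <;> simp [h]

lemma condExp_ae_eq_of_condExp_mul_ae_eq (hw : AEStronglyMeasurable[m] w μ)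
    (hw0 : ∀ᵐ ω ∂μ, w ω ≠ 0) (hf : Integrable f μ) (hwf : Integrable (w * f) μ)
    (h : μ[w * f | m] =ᵐ[μ] w * g) : μ[f | m] =ᵐ[μ] g := by
  filter_upwards [condExp_mul_of_aestronglyMeasurable_left hw hwf hf, h, hw0] with ω hpull hω hne
  exact mul_left_cancel₀ hne (hpull.symm.trans hω)

lemma condExp_condExp_sub_self (hm : m ≤ m0) [SigmaFinite (μ.trim hm)] (hf : Integrable f μ) :
    μ[μ[f | m] - f | m] =ᵐ[μ] 0 := by
  filter_upwards [condExp_sub integrable_condExp hf m] with ω hω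
  rw [hω, condExp_of_stronglyMeasurable hm stronglyMeasurable_condExp integrable_condExp]
  exact sub_self _

lemma condExp_mul_condExp_sub_self (hm : m ≤ m0) [SigmaFinite (μ.trim hm)]
    (hw : AEStronglyMeasurable[m] w μ) (hf : Integrable f μ)
    (hwf : Integrable (w * (μ[f | m] - f)) μ) :
    μ[w * (μ[f | m] - f) | m] =ᵐ[μ] 0 := by
  filter_upwards [condExp_mul_of_aestronglyMeasurable_left hw hwf (integrable_condExp.sub hf),
    condExp_condExp_sub_self hm hf] with ω hpull hzero
  rw [hpull, Pi.mul_apply, hzero, Pi.zero_apply, mul_zero]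

lemma condExp_mul_add_mul_condExp_sub_self (hm : m ≤ m0) [SigmaFinite (μ.trim hm)]
    (hw : AEStronglyMeasurable[m] w μ) (hv : AEStronglyMeasurable[m] v μ)
    (hf : Integrable f μ) (hg : Integrable g μ) (hwg : Integrable (w * g) μ)
    (hvf : Integrable (v * (μ[f | m] - f)) μ) :
    μ[w * g + v * (μ[f | m] - f) | m] =ᵐ[μ] w * μ[g | m] :=
  calc μ[w * g + v * (μ[f | m] - f) | m]
      =ᵐ[μ] μ[w * g | m] + μ[v * (μ[f | m] - f) | m] := condExp_add hwg hvf m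
    _ =ᵐ[μ] w * μ[g | m] + 0 :=
        (condExp_mul_of_aestronglyMeasurable_left hw hwg hg).add
          (condExp_mul_condExp_sub_self hm hv hf hvf)
    _ = w * μ[g | m] := add_zero _

end

lemma continuous_inv_one_add_abs : Continuous fun x : ℝ => (1 + |x|)⁻¹ :=
  (continuous_const.add continuous_abs).inv₀ fun x =>
    (add_pos_of_pos_of_nonneg one_pos (abs_nonneg x)).ne'

lemma abs_inv_one_add_abs_le_one (x : ℝ) : |(1 + |x|)⁻¹| ≤ 1 := by
  rw [abs_of_nonneg (by positivity)]
  exact inv_le_one_of_one_le₀ (le_add_of_nonneg_right (abs_nonneg x))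

lemma abs_inv_one_add_abs_mul_self_le_one (x : ℝ) : |(1 + |x|)⁻¹ * x| ≤ 1 := by
  rw [abs_mul, abs_of_nonneg (by positivity), inv_mul_le_one₀ (by positivity)]
  exact le_add_of_nonneg_left zero_le_one

lemma mul_add_div_mul_sub {K : Type*} [Field K] {s : K} (hs : s ≠ 0) (d x y : K) :
    s * (x + d / s * (y - x)) = d * y + x * (s - d) := by
  field_simp
  ring

theorem dr_signal_unbiased_missing_data_general {Ω : Type*} {𝒵 m0 : MeasurableSpace Ω}
    {μ : Measure Ω} (h𝒵 : 𝒵 ≤ m0) [SigmaFinite (μ.trim h𝒵)] {D Y S M g : Ω → ℝ}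
    (hS : S =ᵐ[μ] μ[D | 𝒵]) (hS0 : ∀ᵐ ω ∂μ, S ω ≠ 0)
    (hDY : Integrable (fun ω => D ω * Y ω) μ)
    (hMAR : μ[fun ω => D ω * Y ω | 𝒵] =ᵐ[μ] fun ω => S ω * g ω)
    (hM : AEStronglyMeasurable[𝒵] M μ)
    (hsignal : Integrable (fun ω => M ω + D ω / S ω * (Y ω - M ω)) μ) :
    μ[fun ω => M ω + D ω / S ω * (Y ω - M ω) | 𝒵] =ᵐ[μ] g := by
  let u : Ω → ℝ := fun ω => (1 + |M ω|)⁻¹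
  have hD : Integrable D μ := integrable_of_ae_eq_condExp_of_ae_ne_zero hS hS0
  have hu : AEStronglyMeasurable[𝒵] u μ :=
    continuous_inv_one_add_abs.comp_aestronglyMeasurable hM
  have huS : AEStronglyMeasurable[𝒵] (u * S) μ :=
    hu.mul (stronglyMeasurable_condExp.aestronglyMeasurable.congr hS.symm)
  have huS0 : ∀ᵐ ω ∂μ, (u * S) ω ≠ 0 :=
    hS0.mono fun ω hne => mul_ne_zero (by positivity) hne
  have huDY : Integrable (u * fun ω => D ω * Y ω) μ :=
    hDY.bdd_mul (hu.mono h𝒵) (ae_of_all μ fun ω => abs_inv_one_add_abs_le_one (M ω))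
  have huM : Integrable (u * M * (μ[D | 𝒵] - D)) μ :=
    (integrable_condExp.sub hD).bdd_mul ((hu.mul hM).mono h𝒵)
      (ae_of_all μ fun ω => abs_inv_one_add_abs_mul_self_le_one (M ω))
  have hdecomp : (u * S * fun ω => M ω + D ω / S ω * (Y ω - M ω)) =ᵐ[μ]
      (u * fun ω => D ω * Y ω) + u * M * (μ[D | 𝒵] - D) := by
    filter_upwards [hS, hS0] with ω hω hne
    simp only [Pi.mul_apply, Pi.add_apply, Pi.sub_apply, ← hω]
    rw [mul_assoc, mul_add_div_mul_sub hne, mul_add, mul_assoc]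
  refine condExp_ae_eq_of_condExp_mul_ae_eq huS huS0 hsignal
    ((huDY.add huM).congr hdecomp.symm) ?_
  calc μ[u * S * fun ω => M ω + D ω / S ω * (Y ω - M ω) | 𝒵]
      =ᵐ[μ] μ[(u * fun ω => D ω * Y ω) + u * M * (μ[D | 𝒵] - D) | 𝒵] :=
        condExp_congr_ae hdecomp
    _ =ᵐ[μ] u * μ[fun ω => D ω * Y ω | 𝒵] :=
        condExp_mul_add_mul_condExp_sub_self h𝒵 hu (hu.mul hM) hD hDY huDY huM
    _ =ᵐ[μ] u * S * g := by
        filter_upwards [hMAR] with ω hω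
        simp only [Pi.mul_apply, hω, mul_assoc]

/-- **Unbiasedness of the Robins–Rotnitzky doubly robust signal for the regression
function with partially missing outcome.** For any 𝒵-measurable integrable plug-in
`M` such that the doubly robust signal `M + (D/S)·(Y* − M)` is integrable,
`E[M + (D/S)·(Y* − M) | 𝒵] = E[Y* | 𝒵]` a.s. -/
theorem dr_signal_unbiased_missing_data
    {Ω : Type*} {m0 : MeasurableSpace Ω} {μ : Measure Ω} [IsProbabilityMeasure μ]
    (𝒵 : MeasurableSpace Ω) (h𝒵 : 𝒵 ≤ m0)
    (D Ystar S : Ω → ℝ) (sbar : ℝ) (hsbar0 : 0 < sbar) (hsbar1 : sbar < 1)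
    (hD01 : ∀ ω, D ω = 0 ∨ D ω = 1)
    (hSmeas : Measurable[𝒵] S)
    (hS : S =ᵐ[μ] μ[D | 𝒵])
    (hSbound : ∀ᵐ ω ∂μ, sbar ≤ S ω ∧ S ω ≤ 1)
    (hMAR : μ[fun ω => D ω * Ystar ω | 𝒵] =ᵐ[μ] fun ω => S ω * (μ[Ystar | 𝒵]) ω)
    (hYint : Integrable Ystar μ) :
    ∀ M : Ω → ℝ, Measurable[𝒵] M → Integrable M μ →
      Integrable (fun ω => M ω + D ω / S ω * (Ystar ω - M ω)) μ →
      μ[fun ω => M ω + D ω / S ω * (Ystar ω - M ω) | 𝒵] =ᵐ[μ] μ[Ystar | 𝒵] := by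
  intro M hM _ hsignal
  have hS0 : ∀ᵐ ω ∂μ, S ω ≠ 0 := hSbound.mono fun ω h => (hsbar0.trans_le h.1).ne'
  have hD : Integrable D μ := integrable_of_ae_eq_condExp_of_ae_ne_zero hS hS0
  exact dr_signal_unbiased_missing_data_general h𝒵 hS hS0
    (integrable_mul_of_forall_eq_zero_or_eq_one hD.aestronglyMeasurable hD01 hYint) hMAR
    hM.stronglyMeasurable.aestronglyMeasurable hsignal
end

section
/- Let M be a 𝒵-measurable real random variable with S·M = E[D·Y* | 𝒵] a.s., and assume Y* is integrable. Then for every 𝒵-measurable bounded real random variable h, E[(D/S²)·(Y* − M)·h | 𝒵] = 0 a.s. (Neyman orthogonality of the doubly robust missing-data signal with respect to perturbations of the propensity score: the pathwise derivative of the conditional mean of the signal in the direction h of the propensity-score component is identically zero.) -/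
open MeasureTheory Filter
open scoped ENNReal

/-!
Conditionally on `𝒵`, the weighted residual `D (Y* - M)` has mean
`E[D Y* | 𝒵] - M E[D | 𝒵] = S M - M S = 0`, and the direction `h / S²` is `𝒵`-measurable, so it
factors out of the conditional expectation. The residual is integrable because, for `D ≥ 0` and
`M` measurable with respect to `𝒵`, the functions `D M` and `E[D | 𝒵] M` have the same `L¹` norm.
-/

section WeightedResidual

variable {Ω : Type*} {m m0 : MeasurableSpace Ω} {μ : Measure Ω}

lemma lintegral_condLExp_mul (hm : m ≤ m0) [SigmaFinite (μ.trim hm)] {X g : Ω → ℝ≥0∞}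
    (hX : AEMeasurable X μ) (hg : Measurable[m] g) :
    ∫⁻ ω, μ⁻[X | m] ω * g ω ∂μ = ∫⁻ ω, X ω * g ω ∂μ := by
  have same_trim : (μ.withDensity μ⁻[X | m]).trim hm = (μ.withDensity X).trim hm := by
    refine @Measure.ext _ m _ _ fun s hs ↦ ?_
    rw [trim_measurableSet_eq hm hs, trim_measurableSet_eq hm hs, withDensity_apply _ (hm s hs),
      withDensity_apply _ (hm s hs), setLIntegral_condLExp hm μ X hs]
  calc ∫⁻ ω, μ⁻[X | m] ω * g ω ∂μ
      = ∫⁻ ω, g ω ∂(μ.withDensity μ⁻[X | m]) :=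
        (lintegral_withDensity_eq_lintegral_mul μ (measurable_condLExp' m μ X)
          (hg.mono hm le_rfl)).symm
    _ = ∫⁻ ω, g ω ∂(μ.withDensity X) := by
        rw [← lintegral_trim hm hg, same_trim, lintegral_trim hm hg]
    _ = ∫⁻ ω, X ω * g ω ∂μ :=
        lintegral_withDensity_eq_lintegral_mul₀ hX (hg.mono hm le_rfl).aemeasurable

variable {E : Type*} [NormedAddCommGroup E] [NormedSpace ℝ E]

lemma lintegral_enorm_condExp_smul (hm : m ≤ m0) [SigmaFinite (μ.trim hm)] {f : Ω → ℝ} {g : Ω → E}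
    (hf : Integrable f μ) (hf0 : 0 ≤ᵐ[μ] f) (hg : AEStronglyMeasurable[m] g μ) :
    ∫⁻ ω, ‖(μ[f | m] • g) ω‖ₑ ∂μ = ∫⁻ ω, ‖(f • g) ω‖ₑ ∂μ := by
  calc ∫⁻ ω, ‖(μ[f | m] • g) ω‖ₑ ∂μ
      = ∫⁻ ω, μ⁻[fun ω ↦ ‖f ω‖ₑ | m] ω * ‖hg.mk g ω‖ₑ ∂μ := by
        refine lintegral_congr_ae ?_
        filter_upwards [condLExp_enorm m hf hf0, hg.ae_eq_mk] with ω hω hgω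
        rw [hω, ← hgω, Pi.smul_apply', enorm_smul]
    _ = ∫⁻ ω, ‖f ω‖ₑ * ‖hg.mk g ω‖ₑ ∂μ :=
        lintegral_condLExp_mul hm hf.aestronglyMeasurable.enorm hg.stronglyMeasurable_mk.enorm
    _ = ∫⁻ ω, ‖(f • g) ω‖ₑ ∂μ := by
        refine lintegral_congr_ae ?_
        filter_upwards [hg.ae_eq_mk] with ω hgω
        rw [← hgω, Pi.smul_apply', enorm_smul]

lemma integrable_smul_of_integrable_condExp_smul (hm : m ≤ m0) [SigmaFinite (μ.trim hm)]
    {f : Ω → ℝ} {g : Ω → E} (hf : Integrable f μ) (hf0 : 0 ≤ᵐ[μ] f)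
    (hg : AEStronglyMeasurable[m] g μ) (hfg : Integrable (μ[f | m] • g) μ) :
    Integrable (f • g) μ := by
  refine ⟨hf.aestronglyMeasurable.smul (hg.mono hm), ?_⟩
  rw [hasFiniteIntegral_iff_enorm, ← lintegral_enorm_condExp_smul hm hf hf0 hg]
  exact hfg.hasFiniteIntegral

variable [CompleteSpace E] {D : Ω → ℝ} {Y M : Ω → E}

lemma integrable_smul_sub_of_condExp_smul_ae_eq (hm : m ≤ m0) [SigmaFinite (μ.trim hm)]
    (hD : Integrable D μ) (hD0 : 0 ≤ᵐ[μ] D) (hDY : Integrable (D • Y) μ)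
    (hM : AEStronglyMeasurable[m] M μ) (hmean : μ[D | m] • M =ᵐ[μ] μ[D • Y | m]) :
    Integrable (D • (Y - M)) μ := by
  rw [smul_sub]
  exact hDY.sub (integrable_smul_of_integrable_condExp_smul hm hD hD0 hM
    (integrable_condExp.congr hmean.symm))

lemma condExp_smul_sub_ae_eq_zero
    (hD : Integrable D μ) (hDY : Integrable (D • Y) μ) (hresidual : Integrable (D • (Y - M)) μ)
    (hM : AEStronglyMeasurable[m] M μ) (hmean : μ[D | m] • M =ᵐ[μ] μ[D • Y | m]) :
    μ[D • (Y - M) | m] =ᵐ[μ] 0 := by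
  rw [smul_sub] at hresidual ⊢
  have hDM : Integrable (D • M) μ := by
    simpa only [sub_sub_cancel] using hDY.sub hresidual
  filter_upwards [condExp_sub hDY hDM m, condExp_smul_of_aestronglyMeasurable_right hD hDM hM,
    hmean] with ω hsub hpull hmeanω
  rw [hsub, Pi.sub_apply, hpull, hmeanω, sub_self, Pi.zero_apply]

theorem dr_signal_orthogonal_propensity_missing_data_general
    (hm : m ≤ m0) [SigmaFinite (μ.trim hm)]
    (hD : Integrable D μ) (hD0 : 0 ≤ᵐ[μ] D) (hDY : Integrable (D • Y) μ)
    (hM : AEStronglyMeasurable[m] M μ) (hmean : μ[D | m] • M =ᵐ[μ] μ[D • Y | m])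
    {g : Ω → ℝ} (hg : AEStronglyMeasurable[m] g μ) (hgD : Integrable (g • D • (Y - M)) μ) :
    μ[g • D • (Y - M) | m] =ᵐ[μ] 0 := by
  have hresidual := integrable_smul_sub_of_condExp_smul_ae_eq hm hD hD0 hDY hM hmean
  calc μ[g • D • (Y - M) | m]
      =ᵐ[μ] g • μ[D • (Y - M) | m] := condExp_smul_of_aestronglyMeasurable_left hg hgD hresidual
    _ =ᵐ[μ] g • 0 := EventuallyEq.rfl.smul
        (condExp_smul_sub_ae_eq_zero hD hDY hresidual hM hmean)
    _ = 0 := smul_zero g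

end WeightedResidual

lemma integrable_of_condExp_pos {Ω : Type*} {m m0 : MeasurableSpace Ω} {μ : Measure Ω} [NeZero μ]
    {f : Ω → ℝ} (hf : ∀ᵐ ω ∂μ, 0 < μ[f | m] ω) : Integrable f μ := by
  by_contra hnot
  obtain ⟨ω, hω⟩ := hf.exists
  simp [condExp_of_not_integrable hnot] at hω

lemma abs_div_pow_le_div_pow (n : ℕ) {a s c C : ℝ} (hc : 0 < c) (hcs : c ≤ s) (ha : |a| ≤ C) :
    |a / s ^ n| ≤ C / c ^ n := by
  have hC : 0 ≤ C := (abs_nonneg a).trans ha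
  rw [abs_div, abs_of_pos (pow_pos (hc.trans_le hcs) n)]
  gcongr

lemma integrable_div_pow_smul {Ω E : Type*} {m0 : MeasurableSpace Ω} {μ : Measure Ω}
    [NormedAddCommGroup E] [NormedSpace ℝ E] (n : ℕ) {h S : Ω → ℝ} {f : Ω → E} {c C : ℝ}
    (hf : Integrable f μ) (hh : AEMeasurable h μ) (hhC : ∀ᵐ ω ∂μ, |h ω| ≤ C)
    (hS : AEMeasurable S μ) (hc : 0 < c) (hcS : ∀ᵐ ω ∂μ, c ≤ S ω) :
    Integrable ((h / S ^ n) • f) μ := by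
  refine hf.bdd_smul (C / c ^ n) (hh.div (hS.pow_const n)).aestronglyMeasurable ?_
  filter_upwards [hhC, hcS] with ω hhω hSω
  exact abs_div_pow_le_div_pow n hc hSω hhω

/-- **Neyman orthogonality of the doubly robust missing-data signal with respect to
the propensity score.** If `M` is 𝒵-measurable with `S·M = E[D·Y* | 𝒵]` a.s. and
`Y*` is integrable, then for every 𝒵-measurable bounded `h`,
`E[(D/S²)·(Y* − M)·h | 𝒵] = 0` a.s. -/
theorem dr_signal_orthogonal_propensity_missing_data
    {Ω : Type*} {m0 : MeasurableSpace Ω} {μ : Measure Ω} [IsProbabilityMeasure μ]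
    (𝒵 : MeasurableSpace Ω) (h𝒵 : 𝒵 ≤ m0)
    (D Ystar S M : Ω → ℝ) (sbar : ℝ) (hsbar0 : 0 < sbar) (hsbar1 : sbar < 1)
    (hD01 : ∀ ω, D ω = 0 ∨ D ω = 1)
    (hSmeas : Measurable[𝒵] S)
    (hS : S =ᵐ[μ] μ[D | 𝒵])
    (hSbound : ∀ᵐ ω ∂μ, sbar ≤ S ω ∧ S ω ≤ 1)
    (hMmeas : Measurable[𝒵] M)
    (hM : (fun ω => S ω * M ω) =ᵐ[μ] μ[fun ω => D ω * Ystar ω | 𝒵])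
    (hYint : Integrable Ystar μ) :
    ∀ h : Ω → ℝ, Measurable[𝒵] h → (∃ C : ℝ, ∀ ω, |h ω| ≤ C) →
      μ[fun ω => D ω / (S ω) ^ 2 * (Ystar ω - M ω) * h ω | 𝒵] =ᵐ[μ] (fun _ => (0 : ℝ)) := by
  rintro h hh ⟨C, hC⟩
  have hD : Integrable D μ := integrable_of_condExp_pos (m := 𝒵) <| by
    filter_upwards [hS, hSbound] with ω hSω hboundω
    exact hSω ▸ hsbar0.trans_le hboundω.1
  have hD0 : 0 ≤ᵐ[μ] D := ae_of_all μ fun ω ↦ by rcases hD01 ω with hω | hω <;> simp [hω]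
  have hDY : Integrable (D • Ystar) μ := hYint.bdd_smul 1 hD.aestronglyMeasurable <|
    ae_of_all μ fun ω ↦ by rcases hD01 ω with hω | hω <;> simp [hω]
  have hmean : μ[D | 𝒵] • M =ᵐ[μ] μ[D • Ystar | 𝒵] := (hS.symm.smul EventuallyEq.rfl).trans hM
  have hresidual := integrable_smul_sub_of_condExp_smul_ae_eq h𝒵 hD hD0 hDY
    hMmeas.aestronglyMeasurable hmean
  have hsignal : Integrable ((h / S ^ 2) • D • (Ystar - M)) μ :=
    integrable_div_pow_smul 2 hresidual (hh.mono h𝒵 le_rfl).aemeasurable (ae_of_all μ hC)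
      (hSmeas.mono h𝒵 le_rfl).aemeasurable hsbar0 (hSbound.mono fun _ hω ↦ hω.1)
  have signal_eq : (fun ω ↦ D ω / S ω ^ 2 * (Ystar ω - M ω) * h ω) =
      (h / S ^ 2) • D • (Ystar - M) := by
    funext ω
    change _ = h ω / S ω ^ 2 * (D ω * (Ystar ω - M ω))
    ring
  rw [signal_eq]
  exact dr_signal_orthogonal_propensity_missing_data_general h𝒵 hD hD0 hDY
    hMmeas.aestronglyMeasurable hmean (hh.div (hSmeas.pow_const 2)).aestronglyMeasurable hsignal
end

section
/- Assume Y¹ and Y⁰ are integrable and (D·Y°)/S − ((1−D)·Y°)/(1−S) is integrable. Then E[(D·Y°)/S − ((1−D)·Y°)/(1−S) | 𝒵] = E[Y¹ − Y⁰ | 𝒵] a.s.; that is, the inverse-probability-weighted signal is an unbiased signal for the conditional average treatment effect. -/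
open MeasureTheory Filter
open scoped ENNReal

/-!
Since `D` is binary, `D·Y° = D·Y¹` and `(1−D)·Y° = (1−D)·Y⁰`, so the signal is the difference of the
inverse-probability-weighted arms `D·Y¹/S` and `(1−D)·Y⁰/(1−S)`. The weights are `𝒵`-measurable and
come out of the conditional expectations, where they cancel the factors `S` and `1−S` produced by
unconfoundedness. Multiplying the signal by `D` recovers the treated arm, so integrability of the
signal already gives integrability of each arm, without a uniform lower bound on `S` and `1−S`.
-/

section

variable {Ω : Type*} {m m0 : MeasurableSpace Ω} {μ : Measure Ω}

lemma integrable_of_condExp_ne_zero {E : Type*} [NormedAddCommGroup E] [NormedSpace ℝ E]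
    [CompleteSpace E] {f : Ω → E} (hf : ∀ᵐ ω ∂μ, μ[f | m] ω ≠ 0) : Integrable f μ := by
  by_contra hf_not
  have hμ : ∀ᵐ _ ∂μ, False := by
    filter_upwards [hf] with ω hω
    exact hω (congrFun (condExp_of_not_integrable hf_not) ω)
  obtain rfl : μ = 0 := ae_eq_bot.1 (eventually_false_iff_eq_bot.1 hμ)
  exact hf_not integrable_zero_measure

lemma condExp_div_of_condExp_eq_mul {f g w : Ω → ℝ} (hw : AEStronglyMeasurable[m] w μ)
    (hw0 : ∀ᵐ ω ∂μ, w ω ≠ 0) (hf : Integrable f μ) (hfw : Integrable (f / w) μ)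
    (hfg : μ[f | m] =ᵐ[μ] w * g) : μ[f / w | m] =ᵐ[μ] g := by
  rw [div_eq_mul_inv] at hfw ⊢
  have hpull : μ[f * w⁻¹ | m] =ᵐ[μ] μ[f | m] * w⁻¹ :=
    condExp_mul_of_aestronglyMeasurable_right hw.inv₀ hfw hf
  filter_upwards [hpull, hfg, hw0] with ω hpullω hfgω hwω
  rw [hpullω, Pi.mul_apply, hfgω, Pi.mul_apply, Pi.inv_apply, mul_comm (w ω),
    mul_inv_cancel_right₀ hwω]

lemma integrable_mul_of_binary {R : Type*} [NormedRing R] {D f : Ω → R}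
    (hD01 : ∀ ω, D ω = 0 ∨ D ω = 1) (hD : AEStronglyMeasurable D μ) (hf : Integrable f μ) :
    Integrable (D * f) μ :=
  hf.bdd_mul (c := ‖(1 : R)‖) hD <| .of_forall fun ω => by rcases hD01 ω with h | h <;> simp [h]

lemma integrable_mul_and_one_sub_mul_of_binary {R : Type*} [NormedRing R] {D f g : Ω → R}
    (hD01 : ∀ ω, D ω = 0 ∨ D ω = 1) (hD : AEStronglyMeasurable D μ)
    (hfg : Integrable (D * f - (1 - D) * g) μ) :
    Integrable (D * f) μ ∧ Integrable ((1 - D) * g) μ := by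
  have hDf_eq : D * (D * f - (1 - D) * g) = D * f := by
    funext ω
    rcases hD01 ω with h | h <;> simp [h]
  have hDf : Integrable (D * f) μ := hDf_eq ▸ integrable_mul_of_binary hD01 hD hfg
  exact ⟨hDf, by simpa only [sub_sub_cancel] using hDf.sub hfg⟩

lemma condExp_binary_mul_div {D Y S : Ω → ℝ} (hD01 : ∀ ω, D ω = 0 ∨ D ω = 1)
    (hD : AEStronglyMeasurable D μ) (hS : AEStronglyMeasurable[m] S μ)
    (hS0 : ∀ᵐ ω ∂μ, S ω ≠ 0) (hY : Integrable Y μ) (hDYS : Integrable (D * (Y / S)) μ)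
    (hfact : μ[D * Y | m] =ᵐ[μ] S * μ[Y | m]) : μ[D * (Y / S) | m] =ᵐ[μ] μ[Y | m] := by
  rw [← mul_div_assoc] at hDYS ⊢
  exact condExp_div_of_condExp_eq_mul hS hS0 (integrable_mul_of_binary hD01 hD hY) hDYS hfact

end

lemma ipw_signal_eq_sub_arms {Ω K : Type*} [DivisionRing K] {D Y1 Y0 : Ω → K} (S : Ω → K)
    (hD01 : ∀ ω, D ω = 0 ∨ D ω = 1) :
    (fun ω => D ω * (D ω * Y1 ω + (1 - D ω) * Y0 ω) / S ω -
      (1 - D ω) * (D ω * Y1 ω + (1 - D ω) * Y0 ω) / (1 - S ω)) =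
      D * (Y1 / S) - (1 - D) * (Y0 / (1 - S)) := by
  funext ω
  rcases hD01 ω with h | h <;> simp [h]

theorem ipw_signal_unbiased_cate_general
    {Ω : Type*} {𝒵 m0 : MeasurableSpace Ω} {μ : Measure Ω}
    {D Y1 Y0 S : Ω → ℝ} (hD01 : ∀ ω, D ω = 0 ∨ D ω = 1)
    {Yo : Ω → ℝ} (hYo : Yo = fun ω => D ω * Y1 ω + (1 - D ω) * Y0 ω)
    (hS : S =ᵐ[μ] μ[D | 𝒵])
    (hSpos : ∀ᵐ ω ∂μ, 0 < S ω) (hSlt : ∀ᵐ ω ∂μ, S ω < 1)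
    (hfact1 : μ[fun ω => D ω * Y1 ω | 𝒵] =ᵐ[μ] fun ω => S ω * (μ[Y1 | 𝒵]) ω)
    (hfact0 : μ[fun ω => (1 - D ω) * Y0 ω | 𝒵] =ᵐ[μ] fun ω => (1 - S ω) * (μ[Y0 | 𝒵]) ω)
    (hY1int : Integrable Y1 μ) (hY0int : Integrable Y0 μ)
    (hint : Integrable (fun ω => D ω * Yo ω / S ω - (1 - D ω) * Yo ω / (1 - S ω)) μ) :
    μ[fun ω => D ω * Yo ω / S ω - (1 - D ω) * Yo ω / (1 - S ω) | 𝒵] =ᵐ[μ]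
      μ[fun ω => Y1 ω - Y0 ω | 𝒵] := by
  subst hYo
  rw [ipw_signal_eq_sub_arms S hD01] at hint ⊢
  have hD : AEStronglyMeasurable D μ := by
    refine (integrable_of_condExp_ne_zero (m := 𝒵) ?_).aestronglyMeasurable
    filter_upwards [hS, hSpos] with ω hSω hposω
    exact hSω ▸ hposω.ne'
  have hSmeas : AEStronglyMeasurable[𝒵] S μ := ⟨_, stronglyMeasurable_condExp, hS⟩
  have hD01' : ∀ ω, (1 - D) ω = 0 ∨ (1 - D) ω = 1 := fun ω => by
    rcases hD01 ω with h | h <;> simp [h]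
  obtain ⟨hint1, hint0⟩ := integrable_mul_and_one_sub_mul_of_binary hD01 hD hint
  have htreated : μ[D * (Y1 / S) | 𝒵] =ᵐ[μ] μ[Y1 | 𝒵] :=
    condExp_binary_mul_div hD01 hD hSmeas (hSpos.mono fun _ h => h.ne') hY1int hint1 hfact1
  have hcontrol : μ[(1 - D) * (Y0 / (1 - S)) | 𝒵] =ᵐ[μ] μ[Y0 | 𝒵] :=
    condExp_binary_mul_div hD01' (aestronglyMeasurable_const.sub hD)
      (aestronglyMeasurable_const.sub hSmeas) (hSlt.mono fun _ h => (sub_pos.2 h).ne')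
      hY0int hint0 hfact0
  calc μ[D * (Y1 / S) - (1 - D) * (Y0 / (1 - S)) | 𝒵]
      =ᵐ[μ] μ[D * (Y1 / S) | 𝒵] - μ[(1 - D) * (Y0 / (1 - S)) | 𝒵] := condExp_sub hint1 hint0 𝒵
    _ =ᵐ[μ] μ[Y1 | 𝒵] - μ[Y0 | 𝒵] := htreated.sub hcontrol
    _ =ᵐ[μ] μ[fun ω => Y1 ω - Y0 ω | 𝒵] := (condExp_sub hY1int hY0int 𝒵).symm

/-- **Unbiasedness of the IPW signal for the conditional average treatment effect.**
With observed outcome `Y° = D·Y¹ + (1−D)·Y⁰` and propensity score `S = E[D | 𝒵]`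
bounded in `[s̄, 1−s̄]`, under the first-moment factorizations
`E[D·Y¹ | 𝒵] = S·E[Y¹ | 𝒵]` and `E[(1−D)·Y⁰ | 𝒵] = (1−S)·E[Y⁰ | 𝒵]`,
`E[(D·Y°)/S − ((1−D)·Y°)/(1−S) | 𝒵] = E[Y¹ − Y⁰ | 𝒵]` a.s. -/
theorem ipw_signal_unbiased_cate
    {Ω : Type*} {m0 : MeasurableSpace Ω} {μ : Measure Ω} [IsProbabilityMeasure μ]
    (𝒵 : MeasurableSpace Ω) (h𝒵 : 𝒵 ≤ m0)
    (D Y1 Y0 S : Ω → ℝ) (sbar : ℝ) (hsbar0 : 0 < sbar) (hsbar1 : sbar < 1 / 2)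
    (hD01 : ∀ ω, D ω = 0 ∨ D ω = 1)
    (Yo : Ω → ℝ) (hYo : Yo = fun ω => D ω * Y1 ω + (1 - D ω) * Y0 ω)
    (hSmeas : Measurable[𝒵] S)
    (hS : S =ᵐ[μ] μ[D | 𝒵])
    (hSbound : ∀ᵐ ω ∂μ, sbar ≤ S ω ∧ S ω ≤ 1 - sbar)
    (hfact1 : μ[fun ω => D ω * Y1 ω | 𝒵] =ᵐ[μ] fun ω => S ω * (μ[Y1 | 𝒵]) ω)
    (hfact0 : μ[fun ω => (1 - D ω) * Y0 ω | 𝒵] =ᵐ[μ] fun ω => (1 - S ω) * (μ[Y0 | 𝒵]) ω)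
    (hY1int : Integrable Y1 μ) (hY0int : Integrable Y0 μ)
    (hint : Integrable (fun ω => D ω * Yo ω / S ω - (1 - D ω) * Yo ω / (1 - S ω)) μ) :
    μ[fun ω => D ω * Yo ω / S ω - (1 - D ω) * Yo ω / (1 - S ω) | 𝒵] =ᵐ[μ]
      μ[fun ω => Y1 ω - Y0 ω | 𝒵] := by
  exact ipw_signal_unbiased_cate_general hD01 hYo hS
    (hSbound.mono fun _ h => hsbar0.trans_le h.1) (hSbound.mono fun _ h => by linarith [h.2])
    hfact1 hfact0 hY1int hY0int hint
end

section
/- Assume Y¹ and Y⁰ are integrable, and let M₁, M₀ be 𝒵-measurable random variables with S·M₁ = E[D·Y¹ | 𝒵] a.s. and (1−S)·M₀ = E[(1−D)·Y⁰ | 𝒵] a.s. Then for all 𝒵-measurable bounded real random variables h, h₁, h₀: (i) E[(1 − D/S)·h₁ | 𝒵] = 0 a.s.; (ii) E[(1 − (1−D)/(1−S))·h₀ | 𝒵] = 0 a.s.; (iii) E[(D/S²)·(Y° − M₁)·h | 𝒵] = 0 a.s. and E[((1−D)/(1−S)²)·(Y° − M₀)·h | 𝒵] = 0 a.s. (Neyman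 orthogonality of the doubly robust CATE signal: the pathwise derivatives of its conditional mean with respect to the two regression-function components and the propensity-score component all vanish.) -/
open MeasureTheory Filter
open scoped ENNReal

/-!
Write `R(f, g) = E[f | 𝒵]·g − f·E[g | 𝒵]`. Pulling out the conditional expectations gives
`E[R(f, g) | 𝒵] = 0`, hence also `E[w·R(f, g) | 𝒵] = 0` for every 𝒵-measurable weight `w` for
which the product is integrable. Both derivatives for the treated arm are of this form:
`(1 − D/S)·h₁ = −(h₁/S)·R(1, D)` and `(D/S²)·(Y° − M₁)·h = (h/S³)·R(D, D·Y°)`.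
The control arm is the treated arm for the treatment `1 − D`, whose propensity score is `1 − S`.
-/

section

variable {Ω : Type*} {m m0 : MeasurableSpace Ω} {μ : Measure Ω}

lemma integrable_of_ae_eq_condExp_of_ne_zero {f g : Ω → ℝ} (hg : g =ᵐ[μ] μ[f | m])
    (hg0 : ∀ᵐ ω ∂μ, g ω ≠ 0) : Integrable f μ := by
  by_contra hfint
  rw [condExp_of_not_integrable hfint] at hg
  have hμ : μ = 0 := ae_eq_bot.1 <| eventually_false_iff_eq_bot.1 <| by
    filter_upwards [hg, hg0] with ω hω hω0 using hω0 hω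
  exact hfint (hμ ▸ integrable_zero_measure)

lemma integrable_div_of_le {f g : Ω → ℝ} {c : ℝ} (hf : Integrable f μ)
    (hg : AEStronglyMeasurable g μ) (hc : 0 < c) (hcg : ∀ᵐ ω ∂μ, c ≤ g ω) :
    Integrable (fun ω => f ω / g ω) μ := by
  simp only [div_eq_mul_inv]
  refine hf.mul_bdd (c := c⁻¹) hg.aemeasurable.inv.aestronglyMeasurable ?_
  filter_upwards [hcg] with ω hω
  rw [norm_inv, Real.norm_of_nonneg (hc.le.trans hω)]
  exact inv_anti₀ hc hω

section CrossResidual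

variable {f g : Ω → ℝ} {C : ℝ}

lemma integrable_condExp_mul_of_bdd (hfC : ∀ᵐ ω ∂μ, ‖f ω‖ ≤ C) (hg : Integrable g μ) :
    Integrable (μ[f | m] * g) μ := by
  have hfC' : ∀ᵐ ω ∂μ, ‖(μ[f | m]) ω‖ ≤ C := ae_bdd_abs_condExp_of_ae_bdd_abs hfC
  exact hg.bdd_mul integrable_condExp.aestronglyMeasurable hfC'

lemma condExp_cross_residual_eq_zero (hf : Integrable f μ) (hfC : ∀ᵐ ω ∂μ, ‖f ω‖ ≤ C)
    (hg : Integrable g μ) : μ[μ[f | m] * g - f * μ[g | m] | m] =ᵐ[μ] 0 := by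
  have hfg : Integrable (μ[f | m] * g) μ := integrable_condExp_mul_of_bdd hfC hg
  have hgf : Integrable (f * μ[g | m]) μ := integrable_condExp.bdd_mul hf.aestronglyMeasurable hfC
  calc μ[μ[f | m] * g - f * μ[g | m] | m]
      =ᵐ[μ] μ[μ[f | m] * g | m] - μ[f * μ[g | m] | m] := condExp_sub hfg hgf m
    _ =ᵐ[μ] μ[f | m] * μ[g | m] - μ[f | m] * μ[g | m] :=
      (condExp_mul_of_stronglyMeasurable_left stronglyMeasurable_condExp hfg hg).sub
        (condExp_mul_of_stronglyMeasurable_right stronglyMeasurable_condExp hgf hf)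
    _ = 0 := sub_self _

lemma condExp_eq_zero_of_ae_eq_mul_cross_residual {w F : Ω → ℝ} (hf : Integrable f μ)
    (hfC : ∀ᵐ ω ∂μ, ‖f ω‖ ≤ C) (hg : Integrable g μ) (hw : StronglyMeasurable[m] w)
    (hFint : Integrable F μ) (hF : F =ᵐ[μ] w * (μ[f | m] * g - f * μ[g | m])) :
    μ[F | m] =ᵐ[μ] 0 := by
  have hres : Integrable (μ[f | m] * g - f * μ[g | m]) μ :=
    (integrable_condExp_mul_of_bdd hfC hg).sub
      (integrable_condExp.bdd_mul hf.aestronglyMeasurable hfC)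
  calc μ[F | m] =ᵐ[μ] μ[w * (μ[f | m] * g - f * μ[g | m]) | m] := condExp_congr_ae hF
    _ =ᵐ[μ] w * μ[μ[f | m] * g - f * μ[g | m] | m] :=
      condExp_mul_of_stronglyMeasurable_left hw (hFint.congr hF) hres
    _ =ᵐ[μ] w * 0 := (EventuallyEq.refl _ w).mul (condExp_cross_residual_eq_zero hf hfC hg)
    _ = 0 := mul_zero w

end CrossResidual

section TreatmentArm

variable {D S Y M h : Ω → ℝ} {C c : ℝ}

lemma condExp_one_sub_div_mul_eq_zero [IsFiniteMeasure μ] (hm : m ≤ m0) (hD : Integrable D μ)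
    (hS : S =ᵐ[μ] μ[D | m]) (hS0 : ∀ᵐ ω ∂μ, S ω ≠ 0) (hh : Measurable[m] h)
    (hint : Integrable (fun ω => (1 - D ω / S ω) * h ω) μ) :
    μ[fun ω => (1 - D ω / S ω) * h ω | m] =ᵐ[μ] 0 := by
  refine condExp_eq_zero_of_ae_eq_mul_cross_residual (f := fun _ => 1) (g := D) (C := 1)
    (w := -h / μ[D | m]) (integrable_const 1) (ae_of_all _ fun _ => norm_one.le) hD
    (hh.neg.div stronglyMeasurable_condExp.measurable).stronglyMeasurable hint ?_
  filter_upwards [hS, hS0] with ω hSω hS0ω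
  simp only [condExp_const hm, Pi.mul_apply, Pi.sub_apply, Pi.div_apply, Pi.neg_apply, ← hSω]
  field_simp
  ring

lemma condExp_div_sq_mul_sub_mul_eq_zero (hD : Integrable D μ) (hDC : ∀ᵐ ω ∂μ, ‖D ω‖ ≤ C)
    (hDY : Integrable (fun ω => D ω * Y ω) μ) (hS : S =ᵐ[μ] μ[D | m])
    (hS0 : ∀ᵐ ω ∂μ, S ω ≠ 0)
    (hM : (fun ω => S ω * M ω) =ᵐ[μ] μ[fun ω => D ω * Y ω | m]) (hh : Measurable[m] h)
    (hint : Integrable (fun ω => D ω / S ω ^ 2 * (Y ω - M ω) * h ω) μ) :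
    μ[fun ω => D ω / S ω ^ 2 * (Y ω - M ω) * h ω | m] =ᵐ[μ] 0 := by
  refine condExp_eq_zero_of_ae_eq_mul_cross_residual (w := h / μ[D | m] ^ 3) hD hDC hDY
    (hh.div (stronglyMeasurable_condExp.measurable.pow_const 3)).stronglyMeasurable hint ?_
  filter_upwards [hS, hS0, hM] with ω hSω hS0ω hMω
  simp only [Pi.mul_apply, Pi.sub_apply, Pi.div_apply, Pi.pow_apply, ← hSω, ← hMω]
  field_simp

lemma integrable_one_sub_div_mul [IsFiniteMeasure μ] (hD : Integrable D μ)
    (hS : AEStronglyMeasurable S μ) (hc : 0 < c) (hcS : ∀ᵐ ω ∂μ, c ≤ S ω)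
    (hh : AEStronglyMeasurable h μ) (hhC : ∀ᵐ ω ∂μ, ‖h ω‖ ≤ C) :
    Integrable (fun ω => (1 - D ω / S ω) * h ω) μ :=
  ((integrable_const 1).sub (integrable_div_of_le hD hS hc hcS)).mul_bdd hh hhC

lemma integrable_of_integrable_mul_of_le (hSM : Integrable (fun ω => S ω * M ω) μ)
    (hS : AEStronglyMeasurable S μ) (hc : 0 < c) (hcS : ∀ᵐ ω ∂μ, c ≤ S ω) : Integrable M μ := by
  refine (integrable_div_of_le hSM hS hc hcS).congr ?_
  filter_upwards [hcS] with ω hω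
  exact mul_div_cancel_left₀ (M ω) (hc.trans_le hω).ne'

lemma integrable_div_sq_mul_sub_mul {B : ℝ} (hD : AEStronglyMeasurable D μ)
    (hDB : ∀ᵐ ω ∂μ, ‖D ω‖ ≤ B) (hY : Integrable Y μ)
    (hSM : Integrable (fun ω => S ω * M ω) μ) (hS : AEStronglyMeasurable S μ) (hc : 0 < c)
    (hcS : ∀ᵐ ω ∂μ, c ≤ S ω) (hh : AEStronglyMeasurable h μ) (hhC : ∀ᵐ ω ∂μ, ‖h ω‖ ≤ C) :
    Integrable (fun ω => D ω / S ω ^ 2 * (Y ω - M ω) * h ω) μ := by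
  have hM : Integrable M μ := integrable_of_integrable_mul_of_le hSM hS hc hcS
  have hDYM : Integrable (fun ω => D ω * (Y ω - M ω)) μ := (hY.sub hM).bdd_mul hD hDB
  have hcS2 : ∀ᵐ ω ∂μ, c ^ 2 ≤ S ω ^ 2 := hcS.mono fun _ hω => pow_le_pow_left₀ hc.le hω 2
  simp only [div_mul_eq_mul_div (_ : ℝ) (S _ ^ 2) (Y _ - M _)]
  exact (integrable_div_of_le hDYM (hS.pow 2) (pow_pos hc 2) hcS2).mul_bdd hh hhC

end TreatmentArm

section BinaryTreatment

variable {D S Y1 Y0 Y M1 M0 h h1 h0 : Ω → ℝ} {c C C1 C0 : ℝ}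

lemma norm_treatment_le_one (hD01 : ∀ ω, D ω = 0 ∨ D ω = 1) : ∀ᵐ ω ∂μ, ‖D ω‖ ≤ 1 :=
  ae_of_all _ fun ω => by rcases hD01 ω with hω | hω <;> simp [hω]

lemma norm_one_sub_treatment_le_one (hD01 : ∀ ω, D ω = 0 ∨ D ω = 1) :
    ∀ᵐ ω ∂μ, ‖1 - D ω‖ ≤ 1 :=
  ae_of_all _ fun ω => by rcases hD01 ω with hω | hω <;> simp [hω]

lemma one_sub_ae_eq_condExp_one_sub [IsFiniteMeasure μ] (hm : m ≤ m0) (hD : Integrable D μ)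
    (hS : S =ᵐ[μ] μ[D | m]) : (fun ω => 1 - S ω) =ᵐ[μ] μ[fun ω => 1 - D ω | m] := by
  have hsub := condExp_sub (integrable_const (μ := μ) (1 : ℝ)) hD m
  rw [condExp_const hm] at hsub
  exact ((EventuallyEq.refl _ fun _ => (1 : ℝ)).sub hS).trans hsub.symm

lemma integrable_observed_outcome (hD : AEStronglyMeasurable D μ) (hD01 : ∀ ω, D ω = 0 ∨ D ω = 1)
    (hY1 : Integrable Y1 μ) (hY0 : Integrable Y0 μ) :
    Integrable (fun ω => D ω * Y1 ω + (1 - D ω) * Y0 ω) μ :=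
  (hY1.bdd_mul hD (norm_treatment_le_one hD01)).add
    (hY0.bdd_mul (aestronglyMeasurable_const.sub hD) (norm_one_sub_treatment_le_one hD01))

lemma integrable_dr_signal_derivatives [IsFiniteMeasure μ] (hD : Integrable D μ)
    (hD01 : ∀ ω, D ω = 0 ∨ D ω = 1) (hY : Integrable Y μ) (hS : AEStronglyMeasurable S μ)
    (hc : 0 < c) (hcS : ∀ᵐ ω ∂μ, c ≤ S ω ∧ S ω ≤ 1 - c)
    (hSM1 : Integrable (fun ω => S ω * M1 ω) μ)
    (hSM0 : Integrable (fun ω => (1 - S ω) * M0 ω) μ)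
    (hh : AEStronglyMeasurable h μ) (hh1 : AEStronglyMeasurable h1 μ)
    (hh0 : AEStronglyMeasurable h0 μ) (hC : ∀ᵐ ω ∂μ, ‖h ω‖ ≤ C) (hC1 : ∀ᵐ ω ∂μ, ‖h1 ω‖ ≤ C1)
    (hC0 : ∀ᵐ ω ∂μ, ‖h0 ω‖ ≤ C0) :
    Integrable (fun ω => (1 - D ω / S ω) * h1 ω) μ ∧
    Integrable (fun ω => (1 - (1 - D ω) / (1 - S ω)) * h0 ω) μ ∧
    Integrable (fun ω => D ω / S ω ^ 2 * (Y ω - M1 ω) * h ω) μ ∧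
    Integrable (fun ω => (1 - D ω) / (1 - S ω) ^ 2 * (Y ω - M0 ω) * h ω) μ := by
  have hD' : Integrable (fun ω => 1 - D ω) μ := (integrable_const 1).sub hD
  have hS' : AEStronglyMeasurable (fun ω => 1 - S ω) μ := aestronglyMeasurable_const.sub hS
  have hcS1 : ∀ᵐ ω ∂μ, c ≤ S ω := hcS.mono fun _ hω => hω.1
  have hcS0 : ∀ᵐ ω ∂μ, c ≤ 1 - S ω := hcS.mono fun _ hω => le_sub_comm.1 hω.2
  exact ⟨integrable_one_sub_div_mul hD hS hc hcS1 hh1 hC1,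
    integrable_one_sub_div_mul hD' hS' hc hcS0 hh0 hC0,
    integrable_div_sq_mul_sub_mul hD.aestronglyMeasurable (norm_treatment_le_one hD01) hY hSM1
      hS hc hcS1 hh hC,
    integrable_div_sq_mul_sub_mul hD'.aestronglyMeasurable (norm_one_sub_treatment_le_one hD01)
      hY hSM0 hS' hc hcS0 hh hC⟩

end BinaryTreatment

theorem dr_signal_neyman_orthogonality_cate_general [IsFiniteMeasure μ]
    {𝒵 : MeasurableSpace Ω} (h𝒵 : 𝒵 ≤ m0) {D Y1 Y0 S Yo M1 M0 h h1 h0 : Ω → ℝ}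
    (hD01 : ∀ ω, D ω = 0 ∨ D ω = 1)
    (hYo : Yo = fun ω => D ω * Y1 ω + (1 - D ω) * Y0 ω) (hYoint : Integrable Yo μ)
    (hS : S =ᵐ[μ] μ[D | 𝒵]) (hS01 : ∀ᵐ ω ∂μ, S ω ≠ 0 ∧ S ω ≠ 1)
    (hM1 : (fun ω => S ω * M1 ω) =ᵐ[μ] μ[fun ω => D ω * Y1 ω | 𝒵])
    (hM0 : (fun ω => (1 - S ω) * M0 ω) =ᵐ[μ] μ[fun ω => (1 - D ω) * Y0 ω | 𝒵])
    (hh : Measurable[𝒵] h) (hh1 : Measurable[𝒵] h1) (hh0 : Measurable[𝒵] h0)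
    (hint1 : Integrable (fun ω => (1 - D ω / S ω) * h1 ω) μ)
    (hint0 : Integrable (fun ω => (1 - (1 - D ω) / (1 - S ω)) * h0 ω) μ)
    (hintS1 : Integrable (fun ω => D ω / S ω ^ 2 * (Yo ω - M1 ω) * h ω) μ)
    (hintS0 : Integrable (fun ω => (1 - D ω) / (1 - S ω) ^ 2 * (Yo ω - M0 ω) * h ω) μ) :
    μ[fun ω => (1 - D ω / S ω) * h1 ω | 𝒵] =ᵐ[μ] 0 ∧
    μ[fun ω => (1 - (1 - D ω) / (1 - S ω)) * h0 ω | 𝒵] =ᵐ[μ] 0 ∧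
    μ[fun ω => D ω / S ω ^ 2 * (Yo ω - M1 ω) * h ω | 𝒵] =ᵐ[μ] 0 ∧
    μ[fun ω => (1 - D ω) / (1 - S ω) ^ 2 * (Yo ω - M0 ω) * h ω | 𝒵] =ᵐ[μ] 0 := by
  have hS0 : ∀ᵐ ω ∂μ, S ω ≠ 0 := hS01.mono fun _ hω => hω.1
  have hS1 : ∀ᵐ ω ∂μ, 1 - S ω ≠ 0 := hS01.mono fun _ hω => sub_ne_zero.2 hω.2.symm
  have hD : Integrable D μ := integrable_of_ae_eq_condExp_of_ne_zero hS hS0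
  have hD' : Integrable (fun ω => 1 - D ω) μ := (integrable_const 1).sub hD
  have hS' := one_sub_ae_eq_condExp_one_sub h𝒵 hD hS
  have hD_le : ∀ᵐ ω ∂μ, ‖D ω‖ ≤ 1 := norm_treatment_le_one hD01
  have hD'_le : ∀ᵐ ω ∂μ, ‖1 - D ω‖ ≤ 1 := norm_one_sub_treatment_le_one hD01
  have htreated : (fun ω => D ω * Y1 ω) = fun ω => D ω * Yo ω := by
    ext ω; rcases hD01 ω with hω | hω <;> simp [hYo, hω]
  have hcontrol : (fun ω => (1 - D ω) * Y0 ω) = fun ω => (1 - D ω) * Yo ω := by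
    ext ω; rcases hD01 ω with hω | hω <;> simp [hYo, hω]
  exact ⟨condExp_one_sub_div_mul_eq_zero h𝒵 hD hS hS0 hh1 hint1,
    condExp_one_sub_div_mul_eq_zero h𝒵 hD' hS' hS1 hh0 hint0,
    condExp_div_sq_mul_sub_mul_eq_zero hD hD_le (hYoint.bdd_mul hD.aestronglyMeasurable hD_le)
      hS hS0 (htreated ▸ hM1) hh hintS1,
    condExp_div_sq_mul_sub_mul_eq_zero hD' hD'_le (hYoint.bdd_mul hD'.aestronglyMeasurable hD'_le)
      hS' hS1 (hcontrol ▸ hM0) hh hintS0⟩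

end

/-- **Neyman orthogonality of the doubly robust CATE signal.** With
`S·M₁ = E[D·Y¹ | 𝒵]` and `(1−S)·M₀ = E[(1−D)·Y⁰ | 𝒵]`, for all 𝒵-measurable bounded
`h, h₁, h₀`: (i) `E[(1 − D/S)·h₁ | 𝒵] = 0`; (ii) `E[(1 − (1−D)/(1−S))·h₀ | 𝒵] = 0`;
(iii) `E[(D/S²)·(Y° − M₁)·h | 𝒵] = 0` and `E[((1−D)/(1−S)²)·(Y° − M₀)·h | 𝒵] = 0`,
all a.s. -/
theorem dr_signal_neyman_orthogonality_cate
    {Ω : Type*} {m0 : MeasurableSpace Ω} {μ : Measure Ω} [IsProbabilityMeasure μ]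
    (𝒵 : MeasurableSpace Ω) (h𝒵 : 𝒵 ≤ m0)
    (D Y1 Y0 S : Ω → ℝ) (sbar : ℝ) (hsbar0 : 0 < sbar) (hsbar1 : sbar < 1 / 2)
    (hD01 : ∀ ω, D ω = 0 ∨ D ω = 1)
    (Yo : Ω → ℝ) (hYo : Yo = fun ω => D ω * Y1 ω + (1 - D ω) * Y0 ω)
    (hSmeas : Measurable[𝒵] S)
    (hS : S =ᵐ[μ] μ[D | 𝒵])
    (hSbound : ∀ᵐ ω ∂μ, sbar ≤ S ω ∧ S ω ≤ 1 - sbar)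
    (hY1int : Integrable Y1 μ) (hY0int : Integrable Y0 μ)
    (M1 M0 : Ω → ℝ)
    (hM1meas : Measurable[𝒵] M1) (hM0meas : Measurable[𝒵] M0)
    (hM1 : (fun ω => S ω * M1 ω) =ᵐ[μ] μ[fun ω => D ω * Y1 ω | 𝒵])
    (hM0 : (fun ω => (1 - S ω) * M0 ω) =ᵐ[μ] μ[fun ω => (1 - D ω) * Y0 ω | 𝒵]) :
    ∀ h h1 h0 : Ω → ℝ,
      Measurable[𝒵] h → Measurable[𝒵] h1 → Measurable[𝒵] h0 →
      (∃ C : ℝ, ∀ ω, |h ω| ≤ C) → (∃ C : ℝ, ∀ ω, |h1 ω| ≤ C) →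
      (∃ C : ℝ, ∀ ω, |h0 ω| ≤ C) →
      (μ[fun ω => (1 - D ω / S ω) * h1 ω | 𝒵] =ᵐ[μ] fun _ => (0 : ℝ)) ∧
      (μ[fun ω => (1 - (1 - D ω) / (1 - S ω)) * h0 ω | 𝒵] =ᵐ[μ] fun _ => (0 : ℝ)) ∧
      (μ[fun ω => D ω / S ω ^ 2 * (Yo ω - M1 ω) * h ω | 𝒵] =ᵐ[μ] fun _ => (0 : ℝ)) ∧
      (μ[fun ω => (1 - D ω) / (1 - S ω) ^ 2 * (Yo ω - M0 ω) * h ω | 𝒵] =ᵐ[μ]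
        fun _ => (0 : ℝ)) := by
  rintro h h1 h0 hh hh1 hh0 ⟨C, hC⟩ ⟨C1, hC1⟩ ⟨C0, hC0⟩
  have hS01 : ∀ᵐ ω ∂μ, S ω ≠ 0 ∧ S ω ≠ 1 := hSbound.mono fun ω hω =>
    ⟨(hsbar0.trans_le hω.1).ne', (hω.2.trans_lt (sub_lt_self 1 hsbar0)).ne⟩
  have hD : Integrable D μ :=
    integrable_of_ae_eq_condExp_of_ne_zero hS (hS01.mono fun _ hω => hω.1)
  have hYoint : Integrable Yo μ :=
    hYo ▸ integrable_observed_outcome hD.aestronglyMeasurable hD01 hY1int hY0int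
  have h𝒵ae {f : Ω → ℝ} (hf : Measurable[𝒵] f) : AEStronglyMeasurable[m0] f μ :=
    (hf.mono h𝒵 le_rfl).aestronglyMeasurable
  obtain ⟨hint1, hint0, hintS1, hintS0⟩ := integrable_dr_signal_derivatives hD hD01 hYoint
    (h𝒵ae hSmeas) hsbar0 hSbound (integrable_condExp.congr hM1.symm)
    (integrable_condExp.congr hM0.symm) (h𝒵ae hh) (h𝒵ae hh1) (h𝒵ae hh0)
    (ae_of_all _ hC) (ae_of_all _ hC1) (ae_of_all _ hC0)
  exact dr_signal_neyman_orthogonality_cate_general h𝒵 hD01 hYo hYoint hS hS01 hM1 hM0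
    hh hh1 hh0 hint1 hint0 hintS1 hintS0
end
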